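/- There is an absolute constant c > 0 such that for every finite A ⊆ F_p with 2 ≤ |A| ≤ p^{1/2}, one has max{|A−A|, |AA|} ≥ c|A|^{13/12}. -/

import Mathlib

open Finset Pointwise

theorem card_sq_le_card_image_mul_card_collisions {α β : Type*} [DecidableEq β]
    (s : Finset α) (f : α → β) :
    #s ^ 2 ≤ #(s.image f) * #{q ∈ s ×ˢ s | f q.1 = f q.2} := by
  have h1 : #s = ∑ b ∈ s.image f, #{a ∈ s | f a = b} := card_eq_sum_card_image f s
  have h2 : #{q ∈ s ×ˢ s | f q.1 = f q.2} = ∑ b ∈ s.image f, #{a ∈ s | f a = b} ^ 2 := by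
    rw [card_eq_sum_card_fiberwise (f := fun q ↦ f q.1) (t := s.image f)]
    · refine sum_congr rfl fun b _ ↦ ?_
      rw [sq, ← card_product]
      congr 1
      ext ⟨x, y⟩
      simp only [mem_filter, mem_product]
      grind
    · intro q hq
      simp only [coe_filter, mem_product, Set.mem_ofPred_eq] at hq
      exact mem_coe.2 (mem_image_of_mem f hq.1.1)
  rw [h2, h1]
  exact sq_sum_le_card_mul_sum_sq

section AddCommGroup
variable {G : Type*} [AddCommGroup G] [DecidableEq G]

theorem exists_subset_card_add_nsmul_le (A B : Finset G) (hA : A.Nonempty) :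
    ∃ X ⊆ A, X.Nonempty ∧
      ∀ n : ℕ, (#(X + n • B) : ℝ) ≤ ((#(A + B) : ℝ) / #A) ^ n * #X := by
  have hne : (A.powerset.erase ∅).Nonempty := ⟨A, by simp [hA.ne_empty]⟩
  obtain ⟨X, hX, hmin⟩ := exists_min_image _ (fun X : Finset G ↦ (#(X + B) : ℝ) / #X) hne
  simp only [mem_erase, mem_powerset] at hX hmin
  have hX0 : X.Nonempty := nonempty_iff_ne_empty.2 hX.1
  have hXc : (0 : ℝ) < #X := by exact_mod_cast hX0.card_pos
  have hpet : ∀ X' ⊆ X, #(X + B) * #X' ≤ #(X' + B) * #X := by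
    intro X' hX'
    rcases X'.eq_empty_or_nonempty with rfl | h0
    · simp
    · have hc : (0 : ℝ) < #X' := by exact_mod_cast h0.card_pos
      have := hmin X' ⟨h0.ne_empty, hX'.trans hX.2⟩
      rw [div_le_div_iff₀ hXc hc] at this
      exact_mod_cast this
  refine ⟨X, hX.2, hX0, fun n ↦ ?_⟩
  have hratio := hmin A ⟨hA.ne_empty, Subset.rfl⟩
  refine le_trans ?_ (mul_le_mul_of_nonneg_right (pow_le_pow_left₀ (by positivity) hratio n)
    hXc.le)
  induction n with
  | zero => simp
  | succ n ih =>
    have h := pluennecke_petridis_inequality_add (n • B) hpet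
    have h' : (#(X + (n + 1) • B) : ℝ) * #X ≤ #(X + B) * #(X + n • B) := by
      rw [succ_nsmul, ← add_assoc, add_comm X (n • B)]
      exact_mod_cast h
    calc (#(X + (n + 1) • B) : ℝ) ≤ (#(X + B) : ℝ) / #X * #(X + n • B) := by
          rw [div_mul_eq_mul_div, le_div_iff₀ hXc]; exact h'
      _ ≤ (#(X + B) : ℝ) / #X * (((#(X + B) : ℝ) / #X) ^ n * #X) := by gcongr
      _ = _ := by ring

theorem exists_large_subset_card_add_nsmul_le (A B : Finset G) (n : ℕ) :
    ∃ X ⊆ A, #A ≤ 2 * #X ∧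
      (#(X + n • B) : ℝ) ≤ (2 * (#(A + B) : ℝ) / #A) ^ n * #X := by
  set K : ℝ := 2 * (#(A + B) : ℝ) / #A with hK
  have hne : {X ∈ A.powerset | (#(X + n • B) : ℝ) ≤ K ^ n * #X}.Nonempty :=
    ⟨∅, by simp⟩
  obtain ⟨X, hX, hmax⟩ := exists_max_image _ (fun X : Finset G ↦ #X) hne
  simp only [mem_filter, mem_powerset] at hX hmax
  refine ⟨X, hX.1, ?_, hX.2⟩
  by_contra! hlt
  have hcard : #(A \ X) = #A - #X := card_sdiff_of_subset hX.1
  have hpos : 0 < #(A \ X) := by omega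
  obtain ⟨Y, hYA, hY0, hY⟩ := exists_subset_card_add_nsmul_le (A \ X) B (card_pos.1 hpos)
  have hYX : Disjoint X Y := disjoint_of_subset_right hYA disjoint_sdiff
  have hApos : (0 : ℝ) < #A := by exact_mod_cast (by omega : 0 < #A)
  have hratio : (#(A \ X + B) : ℝ) / #(A \ X) ≤ K := by
    rw [hK, div_le_div_iff₀ (by exact_mod_cast hpos) hApos]
    have h1 : (#(A \ X + B) : ℝ) ≤ #(A + B) := by
      exact_mod_cast card_le_card (add_subset_add_right sdiff_subset)
    have h2 : (#A : ℝ) ≤ 2 * #(A \ X) := by exact_mod_cast (by omega)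
    calc (#(A \ X + B) : ℝ) * #A ≤ #(A + B) * (2 * #(A \ X)) := by gcongr
      _ = _ := by ring
  have hYn : (#(Y + n • B) : ℝ) ≤ K ^ n * #Y := (hY n).trans (by gcongr)
  have := hmax (X ∪ Y) ⟨union_subset hX.1 (hYA.trans sdiff_subset), by
    rw [union_add, card_union_of_disjoint hYX]
    calc (#(X + n • B ∪ (Y + n • B)) : ℝ) ≤ #(X + n • B) + #(Y + n • B) := by
          exact_mod_cast card_union_le _ _
      _ ≤ K ^ n * #X + K ^ n * #Y := add_le_add hX.2 hYn
      _ = _ := by push_cast; ring⟩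
  rw [card_union_of_disjoint hYX] at this
  have := hY0.card_pos
  omega

theorem exists_subset_card_add_add_le (A B C : Finset G) (hA : A.Nonempty) (hB : B.Nonempty)
    (hC : C.Nonempty) :
    ∃ X ⊆ A, X.Nonempty ∧ #(X + B + C) * #A ^ 2 ≤ 4 * #(A + B) * #(A + C) * #X := by
  set m := #(A + B) with hm
  set n := #(A + C) with hn
  have hm0 : 0 < m := (hA.add hB).card_pos
  have hn0 : 0 < n := (hA.add hC).card_pos
  have : NeZero m := ⟨hm0.ne'⟩
  have : NeZero n := ⟨hn0.ne'⟩
  let S : Finset (G × ZMod m × ZMod n) := B ×ˢ ({0} ×ˢ univ) ∪ C ×ˢ (univ ×ˢ {0})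
  let Z : Finset (G × ZMod m × ZMod n) := A ×ˢ {0}
  obtain ⟨X, hXA, hX0, hX⟩ := exists_subset_card_add_nsmul_le Z S (hA.product (by simp))
  have hXeq : ∀ x ∈ X, x = (x.1, 0) ∧ x.1 ∈ A := by
    intro x hx
    have := mem_product.1 (hXA hx)
    exact ⟨Prod.ext rfl (mem_singleton.1 this.2), this.1⟩
  have hinj : Set.InjOn Prod.fst (X : Set (G × ZMod m × ZMod n)) := by
    intro x hx y hy h
    rw [(hXeq x hx).1, (hXeq y hy).1, h]
  refine ⟨X.image Prod.fst, ?_, hX0.image _, ?_⟩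
  · intro x hx
    obtain ⟨y, hy, rfl⟩ := mem_image.1 hx
    exact (hXeq y hy).2
  have hZS : #(Z + S) ≤ 2 * m * n := by
    have : Z + S ⊆ (A + B) ×ˢ ({0} ×ˢ univ) ∪ (A + C) ×ˢ (univ ×ˢ {0}) := by
      intro x hx
      obtain ⟨z, hz, s, hs, rfl⟩ := mem_add.1 hx
      simp only [Z, S, mem_product, mem_union, mem_singleton, mem_univ] at hz hs ⊢
      rcases hs with ⟨h1, h2⟩ | ⟨h1, h2⟩
      · left; exact ⟨add_mem_add hz.1 h1, by simp [hz.2, h2.1]⟩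
      · right; exact ⟨add_mem_add hz.1 h1, by simp [hz.2, h2.2]⟩
    refine (card_le_card this).trans ((card_union_le _ _).trans ?_)
    simp only [card_product, card_singleton, card_univ, ZMod.card]
    rw [← hm, ← hn]
    apply le_of_eq; ring
  have hlow : #(X.image Prod.fst + B + C) * (m * n) ≤ #(X + 2 • S) := by
    have : (X.image Prod.fst + B + C) ×ˢ (univ : Finset (ZMod m × ZMod n)) ⊆ X + 2 • S := by
      rintro ⟨g, u, v⟩ hx
      obtain ⟨w, hw, c, hc, hg⟩ := mem_add.1 (mem_product.1 hx).1
      obtain ⟨x, hx, b, hb, rfl⟩ := mem_add.1 hw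
      obtain ⟨y, hy, rfl⟩ := mem_image.1 hx
      rw [two_nsmul]
      refine mem_add.2 ⟨y, hy, (b, 0, v) + (c, u, 0), add_mem_add ?_ ?_, ?_⟩
      · simp [S, hb]
      · simp [S, hc]
      · rw [(hXeq y hy).1]
        have hg' : y.1 + (b + c) = g := by rw [← add_assoc]; exact hg
        ext <;> simp [hg']
    refine le_trans (le_of_eq ?_) (card_le_card this)
    simp [card_product, card_univ, ZMod.card]
  have hAc : (0 : ℝ) < #A := by exact_mod_cast hA.card_pos
  have hZ : #Z = #A := by simp [Z]
  have h2 := hX 2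
  rw [hZ, div_pow, div_mul_eq_mul_div, le_div_iff₀ (by positivity)] at h2
  have h3 : (#(X + 2 • S) : ℝ) * #A ^ 2 ≤ (2 * m * n) ^ 2 * #X :=
    h2.trans (by gcongr; exact_mod_cast hZS)
  have h4 : #(X + 2 • S) * #A ^ 2 ≤ (2 * m * n) ^ 2 * #X := by exact_mod_cast h3
  rw [card_image_of_injOn hinj]
  refine Nat.le_of_mul_le_mul_left ?_ (Nat.mul_pos hm0 hn0)
  calc m * n * (#(X.image Prod.fst + B + C) * #A ^ 2)
      = #(X.image Prod.fst + B + C) * (m * n) * #A ^ 2 := by ring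
    _ ≤ #(X + 2 • S) * #A ^ 2 := Nat.mul_le_mul_right _ hlow
    _ ≤ _ := h4
    _ = _ := by ring

theorem exists_card_mul_card_le_card_sub_mul_card_inter_add (C Y : Finset G) :
    ∃ t, #C * #Y ≤ #(C - Y) * #(C ∩ ({t} + Y)) := by
  by_contra! h
  have hcount : ∑ t ∈ C - Y, #(C ∩ ({t} + Y)) = #C * #Y := by
    rw [← card_product, card_eq_sum_card_fiberwise (f := fun q : G × G ↦ q.1 - q.2) (t := C - Y)]
    · refine sum_congr rfl fun t _ ↦ ?_
      refine card_bij' (fun c _ ↦ (c, c - t)) (fun q _ ↦ q.1) ?_ ?_ ?_ ?_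
      · intro c hc
        obtain ⟨h1, h2⟩ := mem_inter.1 hc
        obtain ⟨_, ht, y, hy, rfl⟩ := mem_add.1 h2
        obtain rfl := mem_singleton.1 ht
        simp [h1, hy]
      · rintro ⟨c, y⟩ hq
        simp only [mem_filter, mem_product] at hq
        obtain ⟨⟨hc, hy⟩, rfl⟩ := hq
        exact mem_inter.2 ⟨hc, mem_add.2 ⟨_, mem_singleton_self _, y, hy, by abel⟩⟩
      · simp
      · rintro ⟨c, y⟩ hq
        simp only [mem_filter, mem_product] at hq
        simp [← hq.2]
    · intro q hq
      have := mem_product.1 hq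
      exact sub_mem_sub this.1 this.2
  rcases (C - Y).eq_empty_or_nonempty with h0 | h0
  · have := h 0
    rw [← hcount, h0] at this
    simp at this
  · have : ∑ t ∈ C - Y, #(C - Y) * #(C ∩ ({t} + Y)) < ∑ _t ∈ C - Y, #C * #Y :=
      sum_lt_sum_of_nonempty h0 fun t _ ↦ h t
    rw [← mul_sum, hcount, sum_const, smul_eq_mul] at this
    exact lt_irrefl _ this

theorem exists_card_mul_card_le_card_sub_mul_card_inter_sub (C Y : Finset G) :
    ∃ t, #C * #Y ≤ #(C - Y) * #(C ∩ ({t} - Y)) := by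
  by_contra! h
  have hcol := card_sq_le_card_image_mul_card_collisions (C ×ˢ Y) (fun q : G × G ↦ q.1 - q.2)
  have himg : (C ×ˢ Y).image (fun q : G × G ↦ q.1 - q.2) = C - Y := rfl
  rw [himg] at hcol
  have hcount : #{q ∈ (C ×ˢ Y) ×ˢ (C ×ˢ Y) | q.1.1 - q.1.2 = q.2.1 - q.2.2} =
      ∑ q ∈ C ×ˢ Y, #(C ∩ ({q.1 + q.2} - Y)) := by
    rw [card_eq_sum_card_fiberwise (f := fun q : (G × G) × (G × G) ↦ (q.1.1, q.2.2))
      (t := C ×ˢ Y)]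
    · refine sum_congr rfl fun q hq ↦ ?_
      obtain ⟨c, y⟩ := q
      obtain ⟨hc, hy⟩ := mem_product.1 hq
      refine card_bij' (fun r _ ↦ r.2.1) (fun d _ ↦ ((c, c + y - d), (d, y))) ?_ ?_ ?_ ?_
      · rintro ⟨⟨a, b⟩, ⟨a', b'⟩⟩ hr
        simp only [mem_filter, mem_product, Prod.mk.injEq] at hr
        simp only [mem_inter, mem_sub, mem_singleton]
        obtain ⟨⟨⟨h1, h2⟩, h3⟩, rfl, rfl⟩ := hr
        refine ⟨h2.1, _, rfl, b, h1.2, ?_⟩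
        rw [sub_eq_sub_iff_add_eq_add] at h3
        rw [h3]; abel
      · intro d hd
        simp only [mem_inter, mem_sub, mem_singleton] at hd
        obtain ⟨h1, _, rfl, b, hb, rfl⟩ := hd
        simp only [mem_filter, mem_product, and_true]
        refine ⟨⟨⟨hc, ?_⟩, h1, hy⟩, by abel⟩
        convert hb using 1
        abel
      · rintro ⟨⟨a, b⟩, ⟨a', b'⟩⟩ hr
        simp only [mem_filter, mem_product, Prod.mk.injEq] at hr
        obtain ⟨⟨⟨h1, h2⟩, h3⟩, rfl, rfl⟩ := hr
        rw [sub_eq_sub_iff_add_eq_add] at h3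
        simp [h3]
      · simp
    · intro q hq
      simp only [coe_filter, mem_product, Set.mem_ofPred_eq] at hq
      exact mem_product.2 ⟨hq.1.1.1, hq.1.2.2⟩
  rw [hcount] at hcol
  rcases (C ×ˢ Y).eq_empty_or_nonempty with h0 | h0
  · have := h 0
    rw [← card_product C Y, h0] at this
    simp at this
  · have : ∑ q ∈ C ×ˢ Y, #(C - Y) * #(C ∩ ({q.1 + q.2} - Y)) < ∑ _q ∈ C ×ˢ Y, #C * #Y :=
      sum_lt_sum_of_nonempty h0 fun q _ ↦ h _
    rw [← mul_sum, sum_const, smul_eq_mul, ← card_product, ← sq] at this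
    omega

/-- Greedy covering: if every subset of `C` has a large intersection with a translate of `Y`,
then three quarters of `C` are covered by few translates of `Y`. -/
theorem exists_subset_subset_add_of_forall_exists (C Y : Finset G) (M : ℕ)
    (h : ∀ D ⊆ C, ∃ t, #D * #Y ≤ M * #(D ∩ ({t} + Y))) (hY : Y.Nonempty) :
    ∃ D ⊆ C, ∃ T : Finset G, 3 * #C ≤ 4 * #D ∧ D ⊆ T + Y ∧ #T * #Y ≤ 4 * M := by
  classical
  have hne : {D ∈ C.powerset | ∃ T : Finset G, D ⊆ T + Y ∧
      #T * (#C * #Y) ≤ 4 * M * #D}.Nonempty := 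
    ⟨∅, mem_filter.2 ⟨empty_mem_powerset _, ∅, by simp⟩⟩
  obtain ⟨D, hD, hmax⟩ := exists_max_image _ (fun X : Finset G ↦ #X) hne
  simp only [mem_filter, mem_powerset] at hD hmax
  obtain ⟨hDC, T, hDT, hT⟩ := hD
  have hDc := card_le_card hDC
  have hYc := hY.card_pos
  rcases C.eq_empty_or_nonempty with rfl | hC
  · exact ⟨∅, by simp, ∅, by simp⟩
  have hCc := hC.card_pos
  refine ⟨D, hDC, T, ?_, hDT, ?_⟩
  · by_contra! hlt
    have hcard : #(C \ D) = #C - #D := card_sdiff_of_subset hDC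
    obtain ⟨t, ht⟩ := h (C \ D) sdiff_subset
    have hdis : Disjoint D (C \ D ∩ ({t} + Y)) :=
      disjoint_of_subset_right inter_subset_left disjoint_sdiff
    have hpos : 0 < #(C \ D ∩ ({t} + Y)) := by
      refine Nat.pos_of_ne_zero fun h0 ↦ ?_
      rw [h0, hcard] at ht
      have : 0 < (#C - #D) * #Y := Nat.mul_pos (by omega) hYc
      omega
    have hle := hmax (D ∪ (C \ D ∩ ({t} + Y)))
      ⟨union_subset hDC (inter_subset_left.trans sdiff_subset), insert t T, by
        rw [insert_eq, union_comm {t}, union_add]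
        exact union_subset_union hDT inter_subset_right, by
        rw [card_union_of_disjoint hdis]
        have h1 : #(insert t T) * (#C * #Y) ≤ (#T + 1) * (#C * #Y) :=
          Nat.mul_le_mul_right _ (card_insert_le _ _)
        have h2 : #C * #Y ≤ 4 * (#(C \ D) * #Y) := by
          rw [← mul_assoc]; exact Nat.mul_le_mul_right _ (by omega)
        nlinarith⟩
    rw [card_union_of_disjoint hdis] at hle
    omega
  · refine Nat.le_of_mul_le_mul_left ?_ hCc
    calc #C * (#T * #Y) = #T * (#C * #Y) := by ring
      _ ≤ 4 * M * #D := hT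
      _ ≤ 4 * M * #C := Nat.mul_le_mul_left _ hDc
      _ = _ := by ring

theorem exists_subset_subset_add (C Y : Finset G) (hY : Y.Nonempty) :
    ∃ D ⊆ C, ∃ T : Finset G, 3 * #C ≤ 4 * #D ∧ D ⊆ T + Y ∧ #T * #Y ≤ 4 * #(C - Y) := by
  refine exists_subset_subset_add_of_forall_exists C Y _ (fun D hD ↦ ?_) hY
  obtain ⟨t, ht⟩ := exists_card_mul_card_le_card_sub_mul_card_inter_add D Y
  exact ⟨t, ht.trans (Nat.mul_le_mul_right _ (card_le_card (sub_subset_sub_right hD)))⟩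

theorem exists_subset_subset_sub (C Y : Finset G) (hY : Y.Nonempty) :
    ∃ D ⊆ C, ∃ T : Finset G, 3 * #C ≤ 4 * #D ∧ D ⊆ T - Y ∧ #T * #Y ≤ 4 * #(C - Y) := by
  have := exists_subset_subset_add_of_forall_exists C (-Y) #(C - Y) (fun D hD ↦ ?_) hY.neg
  · simpa [sub_eq_add_neg] using this
  obtain ⟨t, ht⟩ := exists_card_mul_card_le_card_sub_mul_card_inter_sub D Y
  refine ⟨t, ?_⟩
  rw [← sub_eq_add_neg, card_neg]
  exact ht.trans (Nat.mul_le_mul_right _ (card_le_card (sub_subset_sub_right hD)))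

end AddCommGroup

section Field
variable {F : Type*} [Field F] [DecidableEq F]

theorem card_smul_sub_smul_le {a : F} {A B C : Finset F} (hB : B ⊆ A) (hC : C ⊆ A) :
    #(a • B - a • C) ≤ #(A - A) := by
  have h : a • B - a • C ⊆ a • (A - A) := by
    intro w hw
    obtain ⟨_, hv, _, hu, rfl⟩ := mem_sub.1 hw
    obtain ⟨x, hx, rfl⟩ := mem_smul_finset.1 hv
    obtain ⟨y, hy, rfl⟩ := mem_smul_finset.1 hu
    rw [← smul_sub]
    exact smul_mem_smul_finset (sub_mem_sub (hB hx) (hC hy))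
  exact (card_le_card h).trans card_smul_finset_le

theorem exists_eq_smul_of_subset_smul {a : F} {C D : Finset F} (h : D ⊆ a • C) :
    ∃ E ⊆ C, D = a • E := by
  obtain ⟨E, hE, rfl⟩ := subset_image_iff.1 h
  exact ⟨E, hE, rfl⟩

theorem exists_subset_smul_subset_add {a : F} {A U C : Finset F} {N : ℝ} (ha : a ≠ 0)
    (hN : 0 < N) (haN : N ≤ #(a • A ∩ U)) (hC : C ⊆ A) :
    ∃ D ⊆ C, ∃ T : Finset F, 3 * #C ≤ 4 * #D ∧ a • D ⊆ T + U ∧ #T * N ≤ 4 * #(A - A) := by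
  have hne : (a • A ∩ U).Nonempty := by
    rw [← card_pos]
    exact_mod_cast hN.trans_le haN
  obtain ⟨D, hD, T, h3, hDT, hT⟩ := exists_subset_subset_add (a • C) (a • A ∩ U) hne
  obtain ⟨D, hDC, rfl⟩ := exists_eq_smul_of_subset_smul hD
  rw [card_smul_finset₀ ha, card_smul_finset₀ ha] at h3
  refine ⟨D, hDC, T, h3, hDT.trans (add_subset_add_left inter_subset_right), ?_⟩
  have h1 : #(a • C - a • A ∩ U) ≤ #(A - A) :=
    (card_le_card (sub_subset_sub_left inter_subset_left)).trans
      (card_smul_sub_smul_le hC Subset.rfl)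
  calc (#T : ℝ) * N ≤ #T * #(a • A ∩ U) := by gcongr
    _ ≤ 4 * #(A - A) := by exact_mod_cast hT.trans (Nat.mul_le_mul_left _ h1)

theorem exists_subset_smul_subset_sub {a : F} {A U C : Finset F} {N : ℝ} (ha : a ≠ 0)
    (hN : 0 < N) (haN : N ≤ #(a • A ∩ U)) (hC : C ⊆ A) :
    ∃ D ⊆ C, ∃ T : Finset F, 3 * #C ≤ 4 * #D ∧ a • D ⊆ T - U ∧ #T * N ≤ 4 * #(A - A) := by
  have hne : (a • A ∩ U).Nonempty := by
    rw [← card_pos]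
    exact_mod_cast hN.trans_le haN
  obtain ⟨D, hD, T, h3, hDT, hT⟩ := exists_subset_subset_sub (a • C) (a • A ∩ U) hne
  obtain ⟨D, hDC, rfl⟩ := exists_eq_smul_of_subset_smul hD
  rw [card_smul_finset₀ ha, card_smul_finset₀ ha] at h3
  refine ⟨D, hDC, T, h3, hDT.trans (sub_subset_sub_left inter_subset_right), ?_⟩
  have h1 : #(a • C - a • A ∩ U) ≤ #(A - A) :=
    (card_le_card (sub_subset_sub_left inter_subset_left)).trans
      (card_smul_sub_smul_le hC Subset.rfl)
  calc (#T : ℝ) * N ≤ #T * #(a • A ∩ U) := by gcongr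
    _ ≤ 4 * #(A - A) := by exact_mod_cast hT.trans (Nat.mul_le_mul_left _ h1)

theorem exists_subsets_card_smul_add_smul_le {A U B : Finset F} {N : ℝ} (hBA : B ⊆ A)
    (hB0 : 0 ∉ B) (hN : 0 < N) (hBN : ∀ a ∈ B, N ≤ #(a • A ∩ U))
    {a b c d : F} (ha : a ∈ B) (hb : b ∈ B) (hc : c ∈ B) (hd : d ∈ B) :
    ∃ X ⊆ B, ∃ Y ⊆ B, #B ≤ 2 * #X ∧ #B ≤ 2 * #Y ∧
      #((c - d) • X + (a - b) • Y) * N ^ 4 ≤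
        256 * (#(A - A) : ℝ) ^ 4 * #(U - U - U - U) := by
  have h0 : ∀ x ∈ B, x ≠ 0 := fun x hx h ↦ hB0 (h ▸ hx)
  obtain ⟨Y₁, hY₁, T₁, hc₁, hs₁, ht₁⟩ :=
    exists_subset_smul_subset_add (h0 a ha) hN (hBN a ha) hBA
  obtain ⟨Y, hY, T₂, hc₂, hs₂, ht₂⟩ :=
    exists_subset_smul_subset_add (h0 b hb) hN (hBN b hb) (hY₁.trans hBA)
  obtain ⟨X₁, hX₁, T₃, hc₃, hs₃, ht₃⟩ :=
    exists_subset_smul_subset_sub (h0 c hc) hN (hBN c hc) hBA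
  obtain ⟨X, hX, T₄, hc₄, hs₄, ht₄⟩ :=
    exists_subset_smul_subset_add (h0 d hd) hN (hBN d hd) (hX₁.trans hBA)
  refine ⟨X, hX.trans hX₁, Y, hY.trans hY₁, by omega, by omega, ?_⟩
  have hsub : (c - d) • X + (a - b) • Y ⊆ T₁ - T₂ + T₃ - T₄ + (U - U - U - U) := by
    intro w hw
    obtain ⟨_, hv, _, hu, rfl⟩ := mem_add.1 hw
    obtain ⟨x, hx, rfl⟩ := mem_smul_finset.1 hv
    obtain ⟨y, hy, rfl⟩ := mem_smul_finset.1 hu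
    have hx' := hX hx
    have hy' := hY hy
    obtain ⟨t₁, hm₁, u₁, hu₁, e₁⟩ := mem_add.1 (hs₁ (smul_mem_smul_finset (a := a) hy'))
    obtain ⟨t₂, hm₂, u₂, hu₂, e₂⟩ := mem_add.1 (hs₂ (smul_mem_smul_finset (a := b) hy))
    obtain ⟨t₃, hm₃, u₃, hu₃, e₃⟩ := mem_sub.1 (hs₃ (smul_mem_smul_finset (a := c) hx'))
    obtain ⟨t₄, hm₄, u₄, hu₄, e₄⟩ := mem_add.1 (hs₄ (smul_mem_smul_finset (a := d) hx))
    refine mem_add.2 ⟨t₁ - t₂ + t₃ - t₄,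
      sub_mem_sub (add_mem_add (sub_mem_sub hm₁ hm₂) hm₃) hm₄, u₁ - u₂ - u₃ - u₄,
      sub_mem_sub (sub_mem_sub (sub_mem_sub hu₁ hu₂) hu₃) hu₄, ?_⟩
    rw [sub_smul, sub_smul, ← e₁, ← e₂, ← e₃, ← e₄]
    abel
  have hcard : #((c - d) • X + (a - b) • Y) ≤
      #T₁ * #T₂ * #T₃ * #T₄ * #(U - U - U - U) := by
    refine (card_le_card hsub).trans (card_add_le.trans (Nat.mul_le_mul_right _ ?_))
    refine card_sub_le.trans (Nat.mul_le_mul_right _ ?_)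
    exact card_add_le.trans (Nat.mul_le_mul_right _ card_sub_le)
  calc #((c - d) • X + (a - b) • Y) * N ^ 4
      ≤ (#T₁ * #T₂ * #T₃ * #T₄ * #(U - U - U - U) : ℝ) * N ^ 4 := by
        gcongr; exact_mod_cast hcard
    _ = (#T₁ * N) * (#T₂ * N) * (#T₃ * N) * (#T₄ * N) * #(U - U - U - U) := by ring
    _ ≤ (4 * #(A - A)) * (4 * #(A - A)) * (4 * #(A - A)) * (4 * #(A - A)) *
        #(U - U - U - U) := by gcongr
    _ = _ := by ring

/-- `IsDiffQuot B ξ` says that `ξ` is a quotient of two differences of elements of `B`. -/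
def IsDiffQuot (B : Finset F) (ξ : F) : Prop :=
  ∃ a ∈ B, ∃ b ∈ B, ∃ c ∈ B, ∃ d ∈ B, c ≠ d ∧ ξ * (c - d) = a - b

theorem card_pow_three_le_of_not_isDiffQuot {A B X Y : Finset F} {a b c d ξ : F}
    (hBA : B ⊆ A) (hB : B.Nonempty) (hX : X ⊆ B) (hY : Y ⊆ B) (hXc : #B ≤ 2 * #X)
    (hYc : #B ≤ 2 * #Y) (hcd : c ≠ d) (hξ : ξ * (c - d) = a - b)
    (hξ' : ¬ IsDiffQuot B (ξ - 1)) :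
    #B ^ 3 ≤ 32 * #(A - A) * #((c - d) • X + (a - b) • Y) := by
  have hBc := hB.card_pos
  have hcd' : c - d ≠ 0 := sub_ne_zero.2 hcd
  have hX0 : X.Nonempty := card_pos.1 (by omega)
  have hY0 : Y.Nonempty := card_pos.1 (by omega)
  obtain ⟨Z, hZX, hZ0, hZ⟩ := exists_subset_card_add_add_le ((c - d) • X) (-((c - d) • Y))
    ((a - b) • Y) hX0.smul_finset hY0.smul_finset.neg hY0.smul_finset
  have hinj : #Z * #Y ≤ #(Z + -((c - d) • Y) + (a - b) • Y) := by
    rw [← card_product]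
    refine card_le_card_of_injOn (fun q ↦ q.1 + -((c - d) • q.2) + (a - b) • q.2) ?_ ?_
    · rintro ⟨z, y⟩ hq
      obtain ⟨hz, hy⟩ := mem_product.1 hq
      exact add_mem_add (add_mem_add hz (neg_mem_neg (smul_mem_smul_finset hy)))
        (smul_mem_smul_finset hy)
    · rintro ⟨z, y⟩ hq ⟨z', y'⟩ hq' h
      obtain ⟨hz, hy⟩ := mem_product.1 hq
      obtain ⟨hz', hy'⟩ := mem_product.1 hq'
      obtain ⟨x, hx, rfl⟩ := mem_smul_finset.1 (hZX hz)
      obtain ⟨x', hx', rfl⟩ := mem_smul_finset.1 (hZX hz')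
      simp only [smul_eq_mul, ← hξ] at h
      have h' : x + (ξ - 1) * y = x' + (ξ - 1) * y' := by
        refine mul_left_cancel₀ hcd' ?_
        linear_combination h
      have hyy : y = y' := by
        by_contra hne
        exact hξ' ⟨x', hX hx', x, hX hx, y, hY hy, y', hY hy', hne, by linear_combination h'⟩
      subst hyy
      rw [add_left_injective _ h']
  have hdiff : #((c - d) • X + -((c - d) • Y)) ≤ #(A - A) := by
    rw [← sub_eq_add_neg]
    exact card_smul_sub_smul_le (hX.trans hBA) (hY.trans hBA)
  rw [card_smul_finset₀ hcd'] at hZ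
  have hkey : #Y * #X ^ 2 ≤ 4 * #(A - A) * #((c - d) • X + (a - b) • Y) := by
    refine Nat.le_of_mul_le_mul_left ?_ hZ0.card_pos
    calc #Z * (#Y * #X ^ 2) = #Z * #Y * #X ^ 2 := by ring
      _ ≤ #(Z + -((c - d) • Y) + (a - b) • Y) * #X ^ 2 := Nat.mul_le_mul_right _ hinj
      _ ≤ _ := hZ
      _ ≤ 4 * #(A - A) * #((c - d) • X + (a - b) • Y) * #Z := by gcongr
      _ = _ := by ring
  calc #B ^ 3 = #B * #B ^ 2 := by ring
    _ ≤ (2 * #Y) * (2 * #X) ^ 2 := by gcongr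
    _ = 8 * (#Y * #X ^ 2) := by ring
    _ ≤ 8 * (4 * #(A - A) * #((c - d) • X + (a - b) • Y)) := by gcongr
    _ = _ := by ring

theorem card_sq_le_of_card_collisions_le {B X Y : Finset F} {a b c d ξ : F}
    (hB : B.Nonempty) (hX : X ⊆ B) (hY : Y ⊆ B) (hXc : #B ≤ 2 * #X)
    (hYc : #B ≤ 2 * #Y) (hcd : c ≠ d) (hξ : ξ * (c - d) = a - b)
    (hE : #{q ∈ (B ×ˢ B) ×ˢ (B ×ˢ B) | q.1.1 + ξ * q.1.2 = q.2.1 + ξ * q.2.2} ≤ 2 * #B ^ 2) :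
    #B ^ 2 ≤ 32 * #((c - d) • X + (a - b) • Y) := by
  have hBc := hB.card_pos
  have hcd' : c - d ≠ 0 := sub_ne_zero.2 hcd
  have hcol := card_sq_le_card_image_mul_card_collisions (X ×ˢ Y)
    (fun q : F × F ↦ (c - d) * q.1 + (a - b) * q.2)
  have himg : (X ×ˢ Y).image (fun q : F × F ↦ (c - d) * q.1 + (a - b) * q.2) ⊆
      (c - d) • X + (a - b) • Y := by
    intro w hw
    obtain ⟨q, hq, rfl⟩ := mem_image.1 hw
    obtain ⟨hx, hy⟩ := mem_product.1 hq
    exact add_mem_add (smul_mem_smul_finset hx) (smul_mem_smul_finset hy)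
  have hle : #{q ∈ (X ×ˢ Y) ×ˢ (X ×ˢ Y) |
      (c - d) * q.1.1 + (a - b) * q.1.2 = (c - d) * q.2.1 + (a - b) * q.2.2} ≤ 2 * #B ^ 2 := by
    refine (card_le_card ?_).trans hE
    intro q hq
    simp only [mem_filter, mem_product] at hq ⊢
    refine ⟨⟨⟨hX hq.1.1.1, hY hq.1.1.2⟩, hX hq.1.2.1, hY hq.1.2.2⟩, mul_left_cancel₀ hcd' ?_⟩
    linear_combination hq.2 + (q.1.2 - q.2.2) * hξ
  rw [card_product] at hcol
  refine Nat.le_of_mul_le_mul_left ?_ (pow_pos hBc 2)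
  calc #B ^ 2 * #B ^ 2 ≤ (2 * #X) ^ 2 * (2 * #Y) ^ 2 := by gcongr
    _ = 16 * (#X * #Y) ^ 2 := by ring
    _ ≤ 16 * (#((c - d) • X + (a - b) • Y) * (2 * #B ^ 2)) :=
        Nat.mul_le_mul_left _ (hcol.trans (Nat.mul_le_mul (card_le_card himg) hle))
    _ = _ := by ring

theorem exists_card_collisions_le [Fintype F] {B : Finset F} (hB : #B ^ 2 ≤ Fintype.card F) :
    ∃ ξ : F, #{q ∈ (B ×ˢ B) ×ˢ (B ×ˢ B) | q.1.1 + ξ * q.1.2 = q.2.1 + ξ * q.2.2} ≤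
      2 * #B ^ 2 := by
  by_contra! h
  have hq : ∀ q ∈ (B ×ˢ B) ×ˢ (B ×ˢ B),
      #{ξ : F | q.1.1 + ξ * q.1.2 = q.2.1 + ξ * q.2.2} ≤
        1 + if q.1 = q.2 then Fintype.card F else 0 := by
    rintro ⟨⟨x, y⟩, ⟨x', y'⟩⟩ -
    split_ifs with heq
    · exact (card_le_univ _).trans (by omega)
    · refine card_le_one.2 fun ξ hξ η hη ↦ ?_
      simp only [mem_filter, mem_univ, true_and] at hξ hη
      have hyy : y - y' ≠ 0 := by
        intro h0
        obtain rfl := sub_eq_zero.1 h0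
        exact heq (by rw [add_left_injective _ hξ])
      refine mul_right_cancel₀ hyy ?_
      linear_combination hξ - hη
  have hsum : ∑ ξ : F, #{q ∈ (B ×ˢ B) ×ˢ (B ×ˢ B) | q.1.1 + ξ * q.1.2 = q.2.1 + ξ * q.2.2} ≤
      #B ^ 4 + Fintype.card F * #B ^ 2 := by
    simp_rw [card_filter]
    rw [sum_comm]
    simp_rw [← card_filter]
    refine (sum_le_sum hq).trans (le_of_eq ?_)
    rw [sum_add_distrib, sum_const, ← sum_filter, sum_const]
    have : #{q ∈ (B ×ˢ B) ×ˢ (B ×ˢ B) | q.1 = q.2} = #B ^ 2 := by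
      have := diag_card (B ×ˢ B)
      rw [card_product] at this
      rw [sq, ← this]
      congr 1
      ext ⟨x, y⟩
      simp [mem_diag]
      grind
    rw [this]
    simp only [card_product, smul_eq_mul]
    ring
  have hlt := sum_lt_sum_of_nonempty (univ_nonempty (α := F)) fun ξ _ ↦ h ξ
  rw [sum_const, smul_eq_mul, card_univ] at hlt
  nlinarith [Nat.mul_le_mul_right (#B ^ 2) hB]

end Field

theorem isDiffQuot_of_forall_sub_one {p : ℕ} [Fact p.Prime] {B : Finset (ZMod p)}
    (hB : 1 < #B) (h : ∀ ξ, IsDiffQuot B ξ → IsDiffQuot B (ξ - 1)) (ξ : ZMod p) :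
    IsDiffQuot B ξ := by
  have hn : ∀ n : ℕ, IsDiffQuot B (-(n : ZMod p)) := by
    intro n
    induction n with
    | zero =>
      obtain ⟨c, hc, d, hd, hcd⟩ := one_lt_card.1 hB
      exact ⟨c, hc, c, hc, c, hc, d, hd, hcd, by simp⟩
    | succ n ih =>
      have := h _ ih
      rwa [← neg_add', ← Nat.cast_succ] at this
  have := hn (-ξ).val
  rwa [ZMod.natCast_zmod_val, neg_neg] at this

theorem card_pow_three_mul_pow_four_le {p : ℕ} [Fact p.Prime] {A U B : Finset (ZMod p)} {N : ℝ}
    (hBA : B ⊆ A) (hB0 : 0 ∉ B) (hA : #A ^ 2 ≤ p) (hN : 0 < N)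
    (hBN : ∀ a ∈ B, N ≤ #(a • A ∩ U)) :
    (#B : ℝ) ^ 3 * N ^ 4 ≤ 8192 * (#(A - A) : ℝ) ^ 5 * #(U - U - U - U) := by
  rcases B.eq_empty_or_nonempty with rfl | hB
  · simp only [card_empty, Nat.cast_zero, ne_eq, OfNat.ofNat_ne_zero, not_false_eq_true, zero_pow,
      zero_mul]
    positivity
  have hBc := hB.card_pos
  have hAA : #A ≤ #(A - A) := card_le_card_sub_right (hB.mono hBA)
  have hBAc : #B ≤ #A := card_le_card hBA
  rcases Nat.lt_or_ge 1 #B with h1 | h1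
  · suffices ∃ a ∈ B, ∃ b ∈ B, ∃ c ∈ B, ∃ d ∈ B, ∀ X ⊆ B, ∀ Y ⊆ B, #B ≤ 2 * #X →
        #B ≤ 2 * #Y → #B ^ 3 ≤ 32 * #(A - A) * #((c - d) • X + (a - b) • Y) by
      obtain ⟨a, ha, b, hb, c, hc, d, hd, h⟩ := this
      obtain ⟨X, hX, Y, hY, hXc, hYc, hQ⟩ :=
        exists_subsets_card_smul_add_smul_le hBA hB0 hN hBN ha hb hc hd
      have h3 : (#B : ℝ) ^ 3 ≤ 32 * #(A - A) * #((c - d) • X + (a - b) • Y) := by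
        exact_mod_cast h X hX Y hY hXc hYc
      calc (#B : ℝ) ^ 3 * N ^ 4
          ≤ (32 * #(A - A) * #((c - d) • X + (a - b) • Y)) * N ^ 4 := by gcongr
        _ = 32 * #(A - A) * (#((c - d) • X + (a - b) • Y) * N ^ 4) := by ring
        _ ≤ 32 * #(A - A) * (256 * (#(A - A) : ℝ) ^ 4 * #(U - U - U - U)) := by gcongr
        _ = _ := by ring
    by_cases h : ∀ ξ, IsDiffQuot B ξ → IsDiffQuot B (ξ - 1)
    · obtain ⟨ξ, hξ⟩ := exists_card_collisions_le (B := B)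
        (by rw [ZMod.card]; exact (Nat.pow_le_pow_left hBAc 2).trans hA)
      obtain ⟨a, ha, b, hb, c, hc, d, hd, hcd, he⟩ := isDiffQuot_of_forall_sub_one h1 h ξ
      refine ⟨a, ha, b, hb, c, hc, d, hd, fun X hX Y hY hXc hYc ↦ ?_⟩
      have := card_sq_le_of_card_collisions_le hB hX hY hXc hYc hcd he hξ
      calc #B ^ 3 = #B * #B ^ 2 := by ring
        _ ≤ #(A - A) * (32 * #((c - d) • X + (a - b) • Y)) :=
            Nat.mul_le_mul (hBAc.trans hAA) this
        _ = _ := by ring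
    · push Not at h
      obtain ⟨ξ, ⟨a, ha, b, hb, c, hc, d, hd, hcd, he⟩, hξ⟩ := h
      exact ⟨a, ha, b, hb, c, hc, d, hd, fun X hX Y hY hXc hYc ↦
        card_pow_three_le_of_not_isDiffQuot hBA hB hX hY hXc hYc hcd he hξ⟩
  · have hB1 : #B = 1 := by omega
    obtain ⟨a, ha⟩ := hB
    have hcard : #(a • A ∩ U) ≤ #(A - A) :=
      (card_le_card inter_subset_left).trans (card_smul_finset_le.trans hAA)
    have hNA : N ≤ #(A - A) := (hBN a ha).trans (by exact_mod_cast hcard)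
    have hU : U.Nonempty := by
      have : (a • A ∩ U).Nonempty := by
        rw [← card_pos]
        exact_mod_cast hN.trans_le (hBN a ha)
      exact this.mono inter_subset_right
    have hU' : (1 : ℝ) ≤ #(U - U - U - U) := by
      exact_mod_cast (((hU.sub hU).sub hU).sub hU).card_pos
    have hD : (1 : ℝ) ≤ #(A - A) := by exact_mod_cast (by omega : 1 ≤ #(A - A))
    rw [hB1]
    calc ((1 : ℕ) : ℝ) ^ 3 * N ^ 4 = 1 * 1 * N ^ 4 * 1 := by simp
      _ ≤ 8192 * #(A - A) * (#(A - A) : ℝ) ^ 4 * #(U - U - U - U) := by gcongr; norm_num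
      _ = _ := by ring

theorem le_add_sum_ite_of_lt {x N : ℝ} (hN : 0 < N) {J : ℕ} (hx : x < 8 ^ J * N) :
    x ≤ N + ∑ j ∈ range J, 8 ^ (j + 1) * N * (if 8 ^ j * N ≤ x then 1 else 0) := by
  induction J with
  | zero => simpa using hx.le
  | succ J ih =>
    rw [sum_range_succ]
    rcases lt_or_ge x (8 ^ J * N) with h | h
    · refine (ih h).trans (by rw [if_neg h.not_ge]; simp)
    · rw [if_pos h]
      have : 0 ≤ ∑ j ∈ range J, 8 ^ (j + 1) * N * (if 8 ^ j * N ≤ x then (1 : ℝ) else 0) :=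
        sum_nonneg fun j _ ↦ by positivity
      linarith

/-- A logarithm-free dyadic pigeonhole principle. -/
theorem exists_card_le_mul_card_filter {α : Type*} (s : Finset α) (f : α → ℝ) {N : ℝ}
    (hN : 0 < N) (hf : 2 * #s * N < ∑ a ∈ s, f a) :
    ∃ j : ℕ, #s ≤ 16 * 16 ^ j * #{a ∈ s | 8 ^ j * N ≤ f a} := by
  by_contra! h
  obtain ⟨J, hJ⟩ : ∃ J : ℕ, ∀ a ∈ s, f a < 8 ^ J * N := by
    obtain ⟨J, hJ⟩ := pow_unbounded_of_one_lt ((∑ a ∈ s, |f a|) / N) (by norm_num : (1 : ℝ) < 8)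
    refine ⟨J, fun a ha ↦ ?_⟩
    rw [div_lt_iff₀ hN] at hJ
    exact ((le_abs_self _).trans
      (single_le_sum (f := fun a ↦ |f a|) (fun _ _ ↦ abs_nonneg _) ha)).trans_lt hJ
  have hterm : ∀ j ∈ range J, ∑ a ∈ s, 8 ^ (j + 1) * N * (if 8 ^ j * N ≤ f a then (1 : ℝ) else 0)
      ≤ #s * N / 2 * (1 / 2) ^ j := by
    intro j _
    rw [← mul_sum, sum_boole]
    have h1 : (16 * 16 ^ j * #{a ∈ s | 8 ^ j * N ≤ f a} : ℝ) ≤ #s := by exact_mod_cast (h j).le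
    have h2 : (16 : ℝ) ^ j = 8 ^ j * 2 ^ j := by rw [← mul_pow]; norm_num
    rw [h2] at h1
    rw [one_div, inv_pow, ← div_eq_mul_inv, le_div_iff₀ (by positivity)]
    calc (8 : ℝ) ^ (j + 1) * N * #{a ∈ s | 8 ^ j * N ≤ f a} * 2 ^ j
        = (16 * (8 ^ j * 2 ^ j) * #{a ∈ s | 8 ^ j * N ≤ f a}) * N / 2 := by ring
      _ ≤ #s * N / 2 := by gcongr
  have : ∑ a ∈ s, f a ≤ 2 * #s * N :=
    calc ∑ a ∈ s, f a
        ≤ ∑ a ∈ s, (N + ∑ j ∈ range J, 8 ^ (j + 1) * N * (if 8 ^ j * N ≤ f a then 1 else 0)) :=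
          sum_le_sum fun a ha ↦ le_add_sum_ite_of_lt hN (hJ a ha)
      _ ≤ #s * N + ∑ j ∈ range J, #s * N / 2 * (1 / 2 : ℝ) ^ j := by
          rw [sum_add_distrib, sum_comm, sum_const, nsmul_eq_mul]
          gcongr with j hj
          exact hterm j hj
      _ ≤ #s * N + #s * N / 2 * 2 := by
          rw [← mul_sum]
          gcongr
          exact sum_geometric_two_le J
      _ = _ := by ring
  linarith

theorem exists_card_pow_three_le_mul_sum_card_smul_inter_smul {F : Type*} [Field F]
    [DecidableEq F] {A : Finset F} (hA : A.Nonempty) (hA0 : 0 ∉ A) :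
    ∃ b ∈ A, #A ^ 3 ≤ #(A * A) * ∑ a ∈ A, #(a • A ∩ b • A) := by
  have h0 : ∀ x ∈ A, x ≠ 0 := fun x hx h ↦ hA0 (h ▸ hx)
  have hcol := card_sq_le_card_image_mul_card_collisions (A ×ˢ A) (fun q : F × F ↦ q.1 * q.2)
  have himg : (A ×ˢ A).image (fun q : F × F ↦ q.1 * q.2) = A * A := rfl
  have hcount : #{q ∈ (A ×ˢ A) ×ˢ (A ×ˢ A) | q.1.1 * q.1.2 = q.2.1 * q.2.2} ≤
      ∑ b ∈ A, ∑ a ∈ A, #(a • A ∩ b • A) := by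
    rw [← sum_product', card_eq_sum_card_fiberwise
      (f := fun q : (F × F) × (F × F) ↦ (q.2.1, q.1.1)) (t := A ×ˢ A)]
    · refine sum_le_sum fun r hr ↦ ?_
      obtain ⟨b, a⟩ := r
      obtain ⟨hb, ha⟩ := mem_product.1 hr
      refine card_le_card_of_injOn (fun q ↦ a * q.1.2) ?_ ?_
      · rintro ⟨⟨a', x⟩, ⟨b', y⟩⟩ hq
        simp only [coe_filter, mem_filter, mem_product, Set.mem_ofPred_eq, Prod.mk.injEq] at hq
        obtain ⟨⟨⟨⟨-, hx⟩, -, hy⟩, he⟩, rfl, rfl⟩ := hq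
        refine mem_inter.2 ⟨smul_mem_smul_finset hx, ?_⟩
        dsimp only
        rw [he]
        exact smul_mem_smul_finset hy
      · rintro ⟨⟨a', x⟩, ⟨b', y⟩⟩ hq ⟨⟨a'', x'⟩, ⟨b'', y'⟩⟩ hq' h
        simp only [coe_filter, mem_filter, mem_product, Set.mem_ofPred_eq, Prod.mk.injEq] at hq hq'
        obtain ⟨⟨-, he⟩, rfl, rfl⟩ := hq
        obtain ⟨⟨-, he'⟩, rfl, rfl⟩ := hq'
        obtain rfl := mul_left_cancel₀ (h0 _ ha) h
        obtain rfl := mul_left_cancel₀ (h0 _ hb) (he.symm.trans he')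
        rfl
    · intro q hq
      simp only [coe_filter, mem_product, Set.mem_ofPred_eq] at hq
      exact mem_product.2 ⟨hq.1.2.1, hq.1.1.1⟩
  rw [himg, card_product] at hcol
  by_contra! h
  have hlt := sum_lt_sum_of_nonempty hA h
  rw [← mul_sum, sum_const, smul_eq_mul] at hlt
  have := Nat.mul_le_mul_left #(A * A) hcount
  nlinarith

theorem card_pow_thirteen_le {p : ℕ} [Fact p.Prime] {A : Finset (ZMod p)}
    (hA2 : 2 ≤ #A) (hA : #A ^ 2 ≤ p) :
    (#A : ℝ) ^ 13 ≤ 2 ^ 62 * (#(A - A) : ℝ) ^ 8 * (#(A * A) : ℝ) ^ 4 := by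
  have hA₀ : #A ≤ 2 * #(A.erase 0) := by
    have := pred_card_le_card_erase (s := A) (a := 0)
    omega
  obtain ⟨S, hSA, hSc, hS⟩ := exists_large_subset_card_add_nsmul_le (A.erase 0) (-(A.erase 0)) 3
  have hSpos : 0 < #S := by omega
  have hS0 : S.Nonempty := card_pos.1 hSpos
  have hSA' : S ⊆ A := hSA.trans (erase_subset _ _)
  have hzero : 0 ∉ S := fun h ↦ notMem_erase 0 A (hSA h)
  obtain ⟨b, hb, hE⟩ := exists_card_pow_three_le_mul_sum_card_smul_inter_smul hS0 hzero
  have hs : (0 : ℝ) < #S := by exact_mod_cast hSpos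
  have hPpos : 0 < #(A * A) := ((hS0.mono hSA').mul (hS0.mono hSA')).card_pos
  have hP : (0 : ℝ) < #(A * A) := by exact_mod_cast hPpos
  set N : ℝ := (#S : ℝ) ^ 2 / (4 * #(A * A)) with hNdef
  have hN : 0 < N := by positivity
  have hsum : 2 * #S * N < ∑ a ∈ S, (#(a • S ∩ b • S) : ℝ) := by
    have h1 : (#S : ℝ) ^ 3 ≤ #(A * A) * ∑ a ∈ S, (#(a • S ∩ b • S) : ℝ) := by
      exact_mod_cast hE.trans (Nat.mul_le_mul_right _ (card_le_card (mul_subset_mul hSA' hSA')))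
    have h2 : 2 * #S * N * #(A * A) = (#S : ℝ) ^ 3 / 2 := by
      rw [hNdef]; field_simp; ring
    have h3 : (0 : ℝ) < (#S : ℝ) ^ 3 := by positivity
    nlinarith
  obtain ⟨j, hj⟩ := exists_card_le_mul_card_filter S _ hN hsum
  set B := {a ∈ S | 8 ^ j * N ≤ (#(a • S ∩ b • S) : ℝ)}
  have hmain := card_pow_three_mul_pow_four_le (A := S) (U := b • S) (B := B) (N := 8 ^ j * N)
    (filter_subset _ _) (fun h ↦ hzero (filter_subset _ _ h))
    ((Nat.pow_le_pow_left (card_le_card hSA') 2).trans hA) (by positivity)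
    (fun a ha ↦ (mem_filter.1 ha).2)
  have hT : (#(b • S - b • S - b • S - b • S) : ℝ) ≤ 8 * (#(A - A) : ℝ) ^ 3 / (#S : ℝ) ^ 2 := by
    have h1 : b • S - b • S - b • S - b • S ⊆ b • (S + 3 • -(A.erase 0)) := by
      intro w hw
      obtain ⟨_, hu, _, hz₄, rfl⟩ := mem_sub.1 hw
      obtain ⟨_, hv, _, hz₃, rfl⟩ := mem_sub.1 hu
      obtain ⟨_, hz₁, _, hz₂, rfl⟩ := mem_sub.1 hv
      obtain ⟨x₁, hx₁, rfl⟩ := mem_smul_finset.1 hz₁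
      obtain ⟨x₂, hx₂, rfl⟩ := mem_smul_finset.1 hz₂
      obtain ⟨x₃, hx₃, rfl⟩ := mem_smul_finset.1 hz₃
      obtain ⟨x₄, hx₄, rfl⟩ := mem_smul_finset.1 hz₄
      refine mem_smul_finset.2 ⟨x₁ + (-x₂ + -x₃ + -x₄), ?_, by simp only [smul_eq_mul]; ring⟩
      rw [succ_nsmul, two_nsmul]
      exact add_mem_add hx₁ (add_mem_add (add_mem_add (neg_mem_neg (hSA hx₂))
        (neg_mem_neg (hSA hx₃))) (neg_mem_neg (hSA hx₄)))
    have h2 : (#(b • S - b • S - b • S - b • S) : ℝ) ≤ #(S + 3 • -(A.erase 0)) := by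
      exact_mod_cast (card_le_card h1).trans card_smul_finset_le
    have h3 : (#(A.erase 0 + -(A.erase 0)) : ℝ) ≤ #(A - A) := by
      rw [← sub_eq_add_neg]
      exact_mod_cast card_le_card (sub_subset_sub (erase_subset _ _) (erase_subset _ _))
    have h4 : (#S : ℝ) ≤ #(A.erase 0) := by exact_mod_cast card_le_card hSA
    calc (#(b • S - b • S - b • S - b • S) : ℝ)
        ≤ (2 * (#(A.erase 0 + -(A.erase 0)) : ℝ) / #(A.erase 0)) ^ 3 * #S := h2.trans hS
      _ ≤ (2 * (#(A - A) : ℝ) / #S) ^ 3 * #S := by gcongr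
      _ = _ := by field_simp; ring
  have hD : (#(S - S) : ℝ) ≤ #(A - A) := by
    exact_mod_cast card_le_card (sub_subset_sub hSA' hSA')
  have hjR : (#S : ℝ) ≤ 16 * 16 ^ j * #B := by exact_mod_cast hj
  have hpow : ((16 : ℝ) ^ j) ^ 3 = (8 ^ j) ^ 4 := by
    rw [pow_right_comm, pow_right_comm 8]; norm_num
  have hchain : (#S : ℝ) ^ 3 * N ^ 4 ≤ 2 ^ 28 * (#(A - A) : ℝ) ^ 8 / (#S : ℝ) ^ 2 :=
    calc (#S : ℝ) ^ 3 * N ^ 4 ≤ (16 * 16 ^ j * #B) ^ 3 * N ^ 4 := by gcongr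
      _ = 4096 * ((#B : ℝ) ^ 3 * (8 ^ j * N) ^ 4) := by
          rw [mul_pow, mul_pow, hpow]; ring
      _ ≤ 4096 * (8192 * (#(S - S) : ℝ) ^ 5 * #(b • S - b • S - b • S - b • S)) := by gcongr
      _ ≤ 4096 * (8192 * (#(A - A) : ℝ) ^ 5 * (8 * (#(A - A) : ℝ) ^ 3 / (#S : ℝ) ^ 2)) := by
          gcongr
      _ = _ := by ring
  have hS13 : (#S : ℝ) ^ 13 ≤ 2 ^ 36 * (#(A - A) : ℝ) ^ 8 * (#(A * A) : ℝ) ^ 4 := by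
    rw [le_div_iff₀ (by positivity), hNdef, div_pow, mul_div_assoc', div_mul_eq_mul_div,
      div_le_iff₀ (by positivity)] at hchain
    linarith
  have hA4 : (#A : ℝ) ≤ 4 * #S := by exact_mod_cast (by omega : #A ≤ 4 * #S)
  calc (#A : ℝ) ^ 13 ≤ (4 * #S) ^ 13 := by gcongr
    _ = 2 ^ 26 * (#S : ℝ) ^ 13 := by ring
    _ ≤ 2 ^ 26 * (2 ^ 36 * (#(A - A) : ℝ) ^ 8 * (#(A * A) : ℝ) ^ 4) := by gcongr
    _ = _ := by ring

theorem difference_product_small :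
    ∃ c : ℝ, 0 < c ∧ ∀ (p : ℕ), p.Prime → ∀ A : Finset (ZMod p),
      2 ≤ A.card → (A.card : ℝ) ≤ Real.sqrt p →
      c * (A.card : ℝ) ^ ((13 : ℝ) / 12) ≤ max ((A - A).card : ℝ) ((A * A).card : ℝ) := by
  refine ⟨1 / 64, by norm_num, fun p hp A hA2 hA ↦ ?_⟩
  have : Fact p.Prime := ⟨hp⟩
  have hAp : #A ^ 2 ≤ p := by
    have := (Real.le_sqrt (by positivity) (by positivity)).1 hA
    exact_mod_cast this
  have h := card_pow_thirteen_le hA2 hAp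
  set M : ℝ := max (#(A - A) : ℝ) (#(A * A) : ℝ) with hM
  have hM0 : 0 ≤ M := le_max_of_le_left (by positivity)
  have hr : ((#A : ℝ) ^ ((13 : ℝ) / 12)) ^ 12 = (#A : ℝ) ^ 13 := by
    rw [← Real.rpow_natCast, ← Real.rpow_mul (by positivity), ← Real.rpow_natCast]
    norm_num
  refine le_of_pow_le_pow_left₀ (n := 12) (by norm_num) hM0 ?_
  rw [mul_pow, hr]
  have hD : (#(A - A) : ℝ) ^ 8 ≤ M ^ 8 := pow_le_pow_left₀ (by positivity) (le_max_left _ _) 8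
  have hP : (#(A * A) : ℝ) ^ 4 ≤ M ^ 4 := pow_le_pow_left₀ (by positivity) (le_max_right _ _) 4
  have hDP := mul_le_mul hD hP (by positivity) (by positivity)
  rw [← pow_add] at hDP
  have hM12 : 0 ≤ M ^ 12 := by positivity
  norm_num at h hDP ⊢
  linarith
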